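/- Let ((f_n),(τ_n)) be a p-ASF for the Banach space X with analysis operator θ_f, synthesis operator θ_τ and frame operator S_{f,τ} = θ_τ θ_f. Then: (i) a bounded linear operator R : X → ℓ^p(ℕ) is a right inverse of θ_τ (i.e. θ_τ ∘ R = I_X) if and only if R = θ_f S_{f,τ}^{-1} + (I_{ℓ^p(ℕ)} − θ_f S_{f,τ}^{-1} θ_τ) ∘ U for some bounded linear operator U : X → ℓ^p(ℕ); (ii) a bounded linear operator L : ℓ^p(ℕ) → X is a left inverse of θ_f (i.e. L ∘ θ_f = I_X) if and only if L = S_{f,τ}^{-1} θ_τ + V ∘ (I_{ℓ^p(ℕ)} − θ_f S_{f,τ}^{-1} θ_τ) for some bounded linear operator V : ℓ^p(ℕ) → X. -/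

import Mathlib

open Filter
open scoped ENNReal

variable {𝕂 : Type*} [RCLike 𝕂] {X : Type*} [NormedAddCommGroup X] [NormedSpace 𝕂 X]
  [CompleteSpace X]

/-!
Fix a right inverse `R₀` of `B`. Then `R` is a right inverse of `B` exactly when `B (R - R₀) = 0`,
and `1 - R₀ B` is a projection onto the kernel of `B`, so the operators killed by `B` are
exactly those that factor through it. Left inverses are dual. For a frame, invertibility of
`S = θ_τ θ_f` supplies the right inverse `θ_f S⁻¹` of `θ_τ` and the left inverse `S⁻¹ θ_τ` of `θ_f`,
and both lead to the same projection `1 - θ_f S⁻¹ θ_τ`.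
-/

section OneSidedInverses

variable {K E F Y : Type*} [Ring K]
  [AddCommGroup E] [TopologicalSpace E] [Module K E]
  [AddCommGroup F] [TopologicalSpace F] [Module K F]
  [AddCommGroup Y] [TopologicalSpace Y] [IsTopologicalAddGroup Y] [Module K Y]

theorem comp_eq_zero_iff_exists_eq_id_sub_comp {B : Y →L[K] F} {R₀ : F →L[K] Y}
    (hR₀ : B.comp R₀ = ContinuousLinearMap.id K F) (D : E →L[K] Y) :
    B.comp D = 0 ↔
      ∃ U : E →L[K] Y, D = (ContinuousLinearMap.id K Y - R₀.comp B).comp U := by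
  constructor
  · intro hD
    refine ⟨D, ?_⟩
    rw [ContinuousLinearMap.sub_comp, ContinuousLinearMap.id_comp,
      ContinuousLinearMap.comp_assoc, hD, ContinuousLinearMap.comp_zero, sub_zero]
  · rintro ⟨U, rfl⟩
    ext x
    have hBR₀ : B (R₀ (B (U x))) = B (U x) := DFunLike.congr_fun hR₀ (B (U x))
    simp [hBR₀]

theorem comp_eq_zero_iff_exists_eq_comp_id_sub [IsTopologicalAddGroup F] {A : E →L[K] Y}
    {L₀ : Y →L[K] E} (hL₀ : L₀.comp A = ContinuousLinearMap.id K E) (D : Y →L[K] F) :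
    D.comp A = 0 ↔
      ∃ V : Y →L[K] F, D = V.comp (ContinuousLinearMap.id K Y - A.comp L₀) := by
  constructor
  · intro hD
    refine ⟨D, ?_⟩
    rw [ContinuousLinearMap.comp_sub, ContinuousLinearMap.comp_id,
      ← ContinuousLinearMap.comp_assoc, hD, ContinuousLinearMap.zero_comp, sub_zero]
  · rintro ⟨V, rfl⟩
    rw [ContinuousLinearMap.comp_assoc, ContinuousLinearMap.sub_comp,
      ContinuousLinearMap.id_comp, ContinuousLinearMap.comp_assoc, hL₀,
      ContinuousLinearMap.comp_id, sub_self, ContinuousLinearMap.comp_zero]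

theorem comp_eq_id_iff_exists_eq_add_id_sub_comp {B : Y →L[K] F} {R₀ : F →L[K] Y}
    (hR₀ : B.comp R₀ = ContinuousLinearMap.id K F) (R : F →L[K] Y) :
    B.comp R = ContinuousLinearMap.id K F ↔
      ∃ U : F →L[K] Y, R = R₀ + (ContinuousLinearMap.id K Y - R₀.comp B).comp U := by
  calc
    B.comp R = ContinuousLinearMap.id K F ↔ B.comp (R - R₀) = 0 := by
      simp [← hR₀, ContinuousLinearMap.ext_iff, sub_eq_zero]
    _ ↔ ∃ U : F →L[K] Y, R - R₀ = (ContinuousLinearMap.id K Y - R₀.comp B).comp U :=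
      comp_eq_zero_iff_exists_eq_id_sub_comp hR₀ (R - R₀)
    _ ↔ ∃ U : F →L[K] Y, R = R₀ + (ContinuousLinearMap.id K Y - R₀.comp B).comp U := by
      simp only [sub_eq_iff_eq_add']

theorem comp_eq_id_iff_exists_eq_add_comp_id_sub [IsTopologicalAddGroup E] {A : E →L[K] Y}
    {L₀ : Y →L[K] E} (hL₀ : L₀.comp A = ContinuousLinearMap.id K E) (L : Y →L[K] E) :
    L.comp A = ContinuousLinearMap.id K E ↔
      ∃ V : Y →L[K] E, L = L₀ + V.comp (ContinuousLinearMap.id K Y - A.comp L₀) := by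
  calc
    L.comp A = ContinuousLinearMap.id K E ↔ (L - L₀).comp A = 0 := by
      rw [ContinuousLinearMap.sub_comp, hL₀, sub_eq_zero]
    _ ↔ ∃ V : Y →L[K] E, L - L₀ = V.comp (ContinuousLinearMap.id K Y - A.comp L₀) :=
      comp_eq_zero_iff_exists_eq_comp_id_sub hL₀ (L - L₀)
    _ ↔ ∃ V : Y →L[K] E, L = L₀ + V.comp (ContinuousLinearMap.id K Y - A.comp L₀) := by
      simp only [sub_eq_iff_eq_add']

theorem pASF_right_left_inverses_general [IsTopologicalAddGroup E]
    (A : E →L[K] Y) (B : Y →L[K] F) (S : E ≃L[K] F) (hS : (S : E →L[K] F) = B.comp A) :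
    (∀ R : F →L[K] Y,
      B.comp R = ContinuousLinearMap.id K F ↔
        ∃ U : F →L[K] Y,
          R = A.comp (S.symm : F →L[K] E) +
            (ContinuousLinearMap.id K Y - A.comp ((S.symm : F →L[K] E).comp B)).comp U) ∧
    (∀ L : Y →L[K] E,
      L.comp A = ContinuousLinearMap.id K E ↔
        ∃ V : Y →L[K] E,
          L = (S.symm : F →L[K] E).comp B +
            V.comp (ContinuousLinearMap.id K Y - A.comp ((S.symm : F →L[K] E).comp B))) := by
  have right_inverse : B.comp (A.comp (S.symm : F →L[K] E)) = ContinuousLinearMap.id K F := by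
    rw [← ContinuousLinearMap.comp_assoc, ← hS, S.coe_comp_coe_symm]
  have left_inverse : ((S.symm : F →L[K] E).comp B).comp A = ContinuousLinearMap.id K E := by
    rw [ContinuousLinearMap.comp_assoc, ← hS, S.coe_symm_comp_coe]
  exact ⟨comp_eq_id_iff_exists_eq_add_id_sub_comp right_inverse,
    comp_eq_id_iff_exists_eq_add_comp_id_sub left_inverse⟩

end OneSidedInverses

/-- Characterization of all bounded right inverses of the synthesis operator `θ_τ` and of all
bounded left inverses of the analysis operator `θ_f` of a p-ASF `((f_n), (τ_n))` with frame
operator `S = θ_τ θ_f`. -/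
theorem pASF_right_left_inverses (p : ℝ≥0∞) [Fact (1 ≤ p)] (hp : p ≠ ⊤)
    (f : ℕ → X →L[𝕂] 𝕂) (τ : ℕ → X)
    (θf : X →L[𝕂] lp (fun _ : ℕ => 𝕂) p) (θτ : lp (fun _ : ℕ => 𝕂) p →L[𝕂] X)
    (S : X ≃L[𝕂] X)
    (hθf : ∀ (x : X) (n : ℕ), θf x n = f n x)
    (hθτ : ∀ a : lp (fun _ : ℕ => 𝕂) p,
      Tendsto (fun N => ∑ n ∈ Finset.range N, a n • τ n) atTop (nhds (θτ a)))
    (hS : (S : X →L[𝕂] X) = θτ.comp θf) :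
    (∀ R : X →L[𝕂] lp (fun _ : ℕ => 𝕂) p,
      θτ.comp R = ContinuousLinearMap.id 𝕂 X ↔
        ∃ U : X →L[𝕂] lp (fun _ : ℕ => 𝕂) p,
          R = θf.comp (S.symm : X →L[𝕂] X) +
            (ContinuousLinearMap.id 𝕂 (lp (fun _ : ℕ => 𝕂) p) -
              θf.comp ((S.symm : X →L[𝕂] X).comp θτ)).comp U) ∧
    (∀ L : lp (fun _ : ℕ => 𝕂) p →L[𝕂] X,
      L.comp θf = ContinuousLinearMap.id 𝕂 X ↔
        ∃ V : lp (fun _ : ℕ => 𝕂) p →L[𝕂] X,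
          L = (S.symm : X →L[𝕂] X).comp θτ +
            V.comp (ContinuousLinearMap.id 𝕂 (lp (fun _ : ℕ => 𝕂) p) -
              θf.comp ((S.symm : X →L[𝕂] X).comp θτ))) :=
  pASF_right_left_inverses_general θf θτ S hS
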